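/- arXiv:2109.04531 — 4 statements merged into one kernel-verified Lean document; each statement's English description precedes it below -/
import Mathlib

section
/- Let (X,T,μ) be a topological dynamical system with a T-invariant Borel probability measure μ, and let ξ ∈ S¹ = {z ∈ ℂ : |z| = 1} be such that ξ is not an eigenvalue of the Koopman operator of (X,T,μ). Let R_ξ : S¹ → S¹ be the rotation z ↦ ξ·z and m the Haar probability measure on S¹. Then for every ergodic joining θ of (X,T,μ) and (S¹,R_ξ,m) and every f ∈ L¹(X,μ), the integral ∫_{X×S¹} f(x)·z dθ(x,z) equals 0. -/
open MeasureTheory Filter Topology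

/-- The unit circle in `ℂ`, as a subtype. -/
abbrev UnitCircle : Type := Metric.sphere (0 : ℂ) 1

/-- Rotation of the unit circle by the element `ξ`. -/
def rot (ξ : UnitCircle) (z : UnitCircle) : UnitCircle :=
  ⟨(ξ : ℂ) * (z : ℂ), by
    have hξ : ‖(ξ : ℂ)‖ = 1 := mem_sphere_zero_iff_norm.mp ξ.2
    have hz : ‖(z : ℂ)‖ = 1 := mem_sphere_zero_iff_norm.mp z.2
    simp [mem_sphere_zero_iff_norm, norm_mul, hξ, hz]⟩

/-- `ξ` is an eigenvalue of the Koopman operator of the measure-preserving system `(X, T, μ)`: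
there is a nonzero `f ∈ L²(X, μ)` with `f ∘ T = ξ · f` almost everywhere. -/
def KoopmanEigenvalue {X : Type*} [MeasurableSpace X] (T : X → X) (μ : Measure X)
    (ξ : ℂ) : Prop :=
  ∃ f : Lp ℂ 2 μ, f ≠ 0 ∧ ∀ᵐ x ∂μ, f (T x) = ξ * f x

theorem statement_3
    {X : Type*} [MetricSpace X] [CompactSpace X] [MeasurableSpace X] [BorelSpace X]
    (T : X → X) (hT : Continuous T)
    (μ : Measure X) [IsProbabilityMeasure μ] (hμ : μ.map T = μ)
    (ξ : UnitCircle) (hξ : ¬ KoopmanEigenvalue T μ (ξ : ℂ))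
    (m : Measure UnitCircle) [IsProbabilityMeasure m]
    (hm : ∀ ζ : UnitCircle, m.map (rot ζ) = m)
    (θ : Measure (X × UnitCircle)) [IsProbabilityMeasure θ]
    (hθ : Ergodic (Prod.map T (rot ξ)) θ)
    (hθX : θ.map Prod.fst = μ) (hθY : θ.map Prod.snd = m)
    (f : Lp ℂ 1 μ) :
    ∫ p : X × UnitCircle, f p.1 * (p.2 : ℂ) ∂θ = 0 := by
  have hTm : MeasurePreserving T μ μ := ⟨hT.measurable, hμ⟩
  have hJ : MeasurePreserving (Prod.fst : X × UnitCircle → X) θ μ := ⟨measurable_fst, hθX⟩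
  have hW : MeasurePreserving (Prod.map T (rot ξ)) θ θ := hθ.toMeasurePreserving
  have hzm : Measurable (fun p : X × UnitCircle => (p.2 : ℂ)) :=
    measurable_subtype_coe.comp measurable_snd
  have hzn : ∀ p : X × UnitCircle, ‖(p.2 : ℂ)‖ = 1 :=
    fun p => mem_sphere_zero_iff_norm.mp p.2.2
  have hξn : ‖(ξ : ℂ)‖ = 1 := mem_sphere_zero_iff_norm.mp ξ.2
  have hzL : MemLp (fun p : X × UnitCircle => (p.2 : ℂ)) 2 θ :=
    MemLp.of_bound hzm.aestronglyMeasurable 1 (ae_of_all _ fun p => (hzn p).le)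
  let z : Lp ℂ 2 θ := hzL.toLp _
  have hz : z =ᵐ[θ] fun p => (p.2 : ℂ) := hzL.coeFn_toLp
  let J := Lp.compMeasurePreservingₗᵢ (E := ℂ) (p := 2) ℂ _ hJ
  let U := Lp.compMeasurePreservingₗᵢ (E := ℂ) (p := 2) ℂ _ hTm
  let W := Lp.compMeasurePreservingₗᵢ (E := ℂ) (p := 2) ℂ _ hW
  have hJc : ∀ h, J h =ᵐ[θ] h ∘ Prod.fst := fun h => Lp.coeFn_compMeasurePreserving h hJ
  have hUc : ∀ h, U h =ᵐ[μ] h ∘ T := fun h => Lp.coeFn_compMeasurePreserving h hTm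
  have hWc : ∀ h, W h =ᵐ[θ] h ∘ Prod.map T (rot ξ) :=
    fun h => Lp.coeFn_compMeasurePreserving h hW
  have hWz : W z = (ξ : ℂ) • z := by
    apply Lp.ext
    filter_upwards [hWc z, hz, hW.quasiMeasurePreserving.ae hz, Lp.coeFn_smul (ξ : ℂ) z]
      with p h1 h2 h3 h4
    rw [h1, h4]
    simp only [Function.comp, Pi.smul_apply, smul_eq_mul]
    rw [h2, h3]
    rfl
  have hWJ : ∀ h, W (J h) = J (U h) := by
    intro h
    apply Lp.ext
    filter_upwards [hWc (J h), hJc (U h), hW.quasiMeasurePreserving.ae (hJc h),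
      hJ.quasiMeasurePreserving.ae (hUc h)] with p h1 h2 h3 h4
    rw [h1, h2]
    simp only [Function.comp] at *
    rw [h3, h4]
    rfl
  let g : Lp ℂ 2 μ := ContinuousLinearMap.adjoint J.toContinuousLinearMap z
  have hg : ∀ h, inner ℂ h g = inner ℂ (J h) z := fun h =>
    ContinuousLinearMap.adjoint_inner_right J.toContinuousLinearMap h z
  have key : inner ℂ (U g) ((ξ : ℂ) • g) = inner ℂ g g := by
    rw [inner_smul_right, hg, hg, ← inner_smul_right, ← hWz, ← hWJ, W.inner_map_map]
  have hUg : U g = (ξ : ℂ) • g := by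
    rw [← sub_eq_zero, ← norm_eq_zero, ← sq_eq_zero_iff, norm_sub_sq (𝕜 := ℂ), key, norm_smul,
      hξn, U.norm_map, inner_self_eq_norm_sq (𝕜 := ℂ)]
    ring
  have hg0 : g = 0 := by
    by_contra hne
    apply hξ
    refine ⟨g, hne, ?_⟩
    filter_upwards [hUc g, Lp.coeFn_smul (ξ : ℂ) g] with x h1 h2
    rw [hUg, h2] at h1
    simpa using h1.symm
  have hint : ∀ f : X → ℂ, Integrable f μ →
      Integrable (fun p : X × UnitCircle => f p.1 * (p.2 : ℂ)) θ := by
    intro f hf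
    exact (hJ.integrable_comp_of_integrable hf).mul_bdd (c := 1) hzm.aestronglyMeasurable
      (ae_of_all _ fun p => (hzn p).le)
  have main : ∀ f : X → ℂ, Integrable f μ →
      ∫ p : X × UnitCircle, f p.1 * (p.2 : ℂ) ∂θ = 0 := by
    apply Integrable.induction
    · intro c s hs hμs
      have h0 : inner ℂ (J (indicatorConstLp 2 hs hμs.ne (starRingEnd ℂ c))) z = 0 := by
        rw [← hg, hg0, inner_zero_right]
      rw [L2.inner_def] at h0
      refine Eq.trans ?_ h0
      apply integral_congr_ae
      filter_upwards [hz, hJc (indicatorConstLp 2 hs hμs.ne (starRingEnd ℂ c)),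
        hJ.quasiMeasurePreserving.ae (indicatorConstLp_coeFn (p := 2) (hs := hs) (hμs := hμs.ne)
          (c := starRingEnd ℂ c))] with p h1 h2 h3
      rw [h1, h2]
      simp only [Function.comp]
      rw [h3]
      by_cases hp : p.1 ∈ s <;> simp [hp, mul_comm]
    · intro f g _ hf hg hf0 hg0
      simp only [Pi.add_apply, add_mul]
      rw [integral_add (hint _ hf) (hint _ hg), hf0, hg0, add_zero]
    · have : LipschitzWith 1 (fun f : Lp ℂ 1 μ => ∫ p : X × UnitCircle, f p.1 * (p.2 : ℂ) ∂θ) := by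
        apply LipschitzWith.of_dist_le_mul
        intro a b
        rw [dist_eq_norm, dist_eq_norm, ← integral_sub (hint _ (L1.integrable_coeFn a))
          (hint _ (L1.integrable_coeFn b)), L1.norm_eq_integral_norm, NNReal.coe_one, one_mul]
        refine (norm_integral_le_integral_norm _).trans (le_of_eq ?_)
        have hi : ∫ x, ‖(a - b) x‖ ∂μ = ∫ p, ‖(a - b) (Prod.fst p)‖ ∂θ := by
          have hae : AEStronglyMeasurable (fun x => ‖(a - b) x‖) (θ.map Prod.fst) := by
            rw [hθX]
            exact (Lp.aestronglyMeasurable (a - b)).norm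
          have h := integral_map measurable_fst.aemeasurable hae
          exact (congrArg (fun ν => ∫ x, ‖(a - b) x‖ ∂ν) hθX).symm.trans h
        rw [hi]
        apply integral_congr_ae
        filter_upwards [hJ.quasiMeasurePreserving.ae (Lp.coeFn_sub a b)] with p h1
        rw [← sub_mul, norm_mul, hzn, mul_one, h1]
        rfl
      exact isClosed_eq this.continuous continuous_const
    · intro f g hfg hf h
      refine Eq.trans ?_ h
      apply integral_congr_ae
      filter_upwards [hJ.quasiMeasurePreserving.ae hfg] with p h1
      simp only [h1]
  exact main f (L1.integrable_coeFn f)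
end

section
/- Let Λ be a finite set, L > 2 an integer, X ⊆ Λ^ℤ a topologically mixing shift of finite type, W a word allowable in X, and K > 0 an integer such that for any words α, β allowable in X and any l ≥ K there exists an allowable word αwβ where w is a word of length l containing W as a subword. Then the subshift X_{L,W,K} ⊆ X consisting of all points of X in which every window of LK consecutive coordinates contains W as a subword is a nonempty topologically mixing shift of finite type. -/
open Filter Finset Topology

/-- The left shift on two-sided sequences. -/
def shiftZ {Λ : Type*} (x : ℤ → Λ) : ℤ → Λ := fun n => x (n + 1)

/-- The word `w` occurs in `x` starting at coordinate `m`. -/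
def OccursAt {Λ : Type*} (w : List Λ) (x : ℤ → Λ) (m : ℤ) : Prop :=
  ∀ i : Fin w.length, x (m + (i : ℕ)) = w.get i

/-- The word `w` occurs somewhere in `x`. -/
def OccursIn {Λ : Type*} (w : List Λ) (x : ℤ → Λ) : Prop :=
  ∃ m : ℤ, OccursAt w x m

/-- The word `w` is allowable in `X`: it appears in some point of `X`. -/
def AllowableIn {Λ : Type*} (X : Set (ℤ → Λ)) (w : List Λ) : Prop :=
  ∃ x ∈ X, OccursIn w x

/-- `X` is a subshift: a closed shift-invariant subset of the full shift. -/
def IsSubshift {Λ : Type*} [TopologicalSpace Λ] (X : Set (ℤ → Λ)) : Prop :=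
  IsClosed X ∧ shiftZ '' X = X

/-- `X` is a shift of finite type: a subshift defined by excluding a finite set of
forbidden words. -/
def IsSFT {Λ : Type*} [TopologicalSpace Λ] (X : Set (ℤ → Λ)) : Prop :=
  IsSubshift X ∧ ∃ F : Finset (List Λ), X = {x | ∀ w ∈ F, ¬ OccursIn w x}

/-- `X` is topologically mixing (as a subspace system): for any two relatively open nonempty
subsets `U ∩ X`, `V ∩ X` there is `N` such that `σⁿ(U ∩ X)` meets `V ∩ X` for all `n ≥ N`. -/
def MixingSubshift {Λ : Type*} [TopologicalSpace Λ] (X : Set (ℤ → Λ)) : Prop :=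
  ∀ U V : Set (ℤ → Λ), IsOpen U → IsOpen V →
    (U ∩ X).Nonempty → (V ∩ X).Nonempty →
    ∃ N : ℕ, ∀ n ≥ N, (shiftZ^[n] '' (U ∩ X) ∩ (V ∩ X)).Nonempty

/-- The subset of `X` of all points in which every window of `M` consecutive coordinates
contains the word `W`. -/
def WindowSet {Λ : Type*} (X : Set (ℤ → Λ)) (W : List Λ) (M : ℕ) : Set (ℤ → Λ) :=
  {x ∈ X | ∀ m : ℤ, ∃ j : ℤ, m ≤ j ∧ j + W.length ≤ m + M ∧ OccursAt W x j}

theorem occ_congr {Λ : Type*} {w : List Λ} {x y : ℤ → Λ} {m : ℤ} (d : ℤ)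
    (h : OccursAt w x m) (hxy : ∀ k, m ≤ k → k < m + w.length → y (k + d) = x k) :
    OccursAt w y (m + d) := by
  intro i
  have h1 := h i
  have h2 := hxy (m + (i : ℕ)) (by omega) (by have := i.2; omega)
  rw [← h1, ← h2]
  congr 1
  ring

theorem occ_congr0 {Λ : Type*} {w : List Λ} {x y : ℤ → Λ} {m : ℤ}
    (h : OccursAt w x m) (hxy : ∀ k, m ≤ k → k < m + w.length → y k = x k) :
    OccursAt w y m := by
  have := occ_congr (y := y) 0 h (by simpa using hxy)
  simpa using this

theorem occ_append {Λ : Type*} {u v : List Λ} {x : ℤ → Λ} {m : ℤ} :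
    OccursAt (u ++ v) x m ↔ OccursAt u x m ∧ OccursAt v x (m + u.length) := by
  constructor
  · intro h
    constructor
    · intro i
      have := h ⟨i, by have := i.2; simp; omega⟩
      simpa [List.getElem_append_left] using this
    · intro i
      have := h ⟨u.length + i, by have := i.2; simp⟩
      simp only [List.get_eq_getElem] at this ⊢
      rw [List.getElem_append_right (by omega)] at this
      simp only [Nat.add_sub_cancel_left] at this
      rw [← this]; congr 1; push_cast; ring
  · rintro ⟨h1, h2⟩ ⟨i, hi⟩
    simp only [List.get_eq_getElem]
    by_cases hu : i < u.length
    · rw [List.getElem_append_left hu]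
      exact h1 ⟨i, hu⟩
    · rw [List.getElem_append_right (by omega)]
      have := h2 ⟨i - u.length, by simp at hi; omega⟩
      simp only [List.get_eq_getElem] at this
      rw [← this]; congr 1; push_cast [Nat.cast_sub (not_lt.mp hu)]; ring

theorem occ_ofFn {Λ : Type*} {r : ℕ} {f : ℤ → Λ} {x : ℤ → Λ} {m : ℤ} :
    OccursAt (List.ofFn (fun i : Fin r => f (i : ℕ))) x m ↔
      ∀ k : ℤ, 0 ≤ k → k < r → x (m + k) = f k := by
  constructor
  · intro h k h0 hk
    have := h ⟨k.toNat, by simp; omega⟩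
    simpa [h0] using this
  · rintro h ⟨i, hi⟩
    have := h i (by omega) (by simp at hi; omega)
    simpa using this

theorem glue {Λ : Type*} (X : Set (ℤ → Λ)) (F : Finset (List Λ))
    (hF : X = {x | ∀ w ∈ F, ¬ OccursIn w x}) (W : List Λ) (K : ℕ)
    (hKspec : ∀ α β : List Λ, AllowableIn X α → AllowableIn X β → ∀ l ≥ K,
      ∃ w : List Λ, w.length = l ∧ W <:+: w ∧ AllowableIn X (α ++ w ++ β))
    (x y : ℤ → Λ) (hx : x ∈ X) (hy : y ∈ X) (a b : ℤ) (hab : a + K ≤ b) :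
    ∃ z ∈ X, (∀ k < a, z k = x k) ∧ (∀ k, b ≤ k → z k = y k) ∧
      ∃ j, a ≤ j ∧ j + W.length ≤ b ∧ OccursAt W z j := by
  obtain ⟨r, hr⟩ : ∃ r : ℕ, ∀ w ∈ F, w.length ≤ r :=
    ⟨F.sup List.length, fun w hw => Finset.le_sup (f := List.length) hw⟩
  obtain ⟨w, hwl, ⟨s, t, hst⟩, u, hu, p, hp⟩ := hKspec
    (List.ofFn (fun i : Fin r => (fun k => x (a - r + k)) ((i : ℕ) : ℤ)))
    (List.ofFn (fun i : Fin r => (fun k => y (b + k)) ((i : ℕ) : ℤ)))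
    ⟨x, hx, a - r, occ_ofFn.2 fun k _ _ => rfl⟩
    ⟨y, hy, b, occ_ofFn.2 fun k _ _ => rfl⟩ (b - a).toNat (by omega)
  rw [occ_append, occ_append] at hp
  obtain ⟨⟨h1, h2⟩, h3⟩ := hp
  replace h1 := (occ_ofFn (f := fun k => x (a - r + k))).1 h1
  replace h3 := (occ_ofFn (f := fun k => y (b + k))).1 h3
  simp only [List.length_append, List.length_ofFn, hwl] at h2 h3
  have hlen : s.length + W.length + t.length = (b - a).toNat := by
    rw [← hwl, ← hst]; simp [add_assoc]
  rw [← hst, occ_append, occ_append] at h2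
  have hWo := h2.1.2
  let z : ℤ → Λ := fun k => if k < a then x k else if k < b then u (k + (p + r - a)) else y k
  have zx : ∀ k < a, z k = x k := fun k hk => by simp [z, hk]
  have zy : ∀ k, b ≤ k → z k = y k := fun k hk => by
    simp [z, show ¬ k < a by omega, show ¬ k < b by omega]
  have zu : ∀ k, a - r ≤ k → k < b + r → z k = u (k + (p + r - a)) := by
    intro k hk1 hk2
    by_cases hka : k < a
    · rw [zx k hka]
      have := h1 (k - a + r) (by omega) (by omega)
      rw [show k + (p + r - a) = p + (k - a + r) by ring, this]
      congr 1; ring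
    by_cases hkb : k < b
    · simp [z, hka, hkb]
    · rw [zy k (by omega)]
      have := h3 (k - b) (by omega) (by omega)
      rw [show k + (p + r - a) = p + ((r + (b - a).toNat : ℕ) : ℤ) + (k - b) by
        push_cast; omega, this]
      congr 1; ring
  refine ⟨z, ?_, zx, zy, a + s.length, by omega, by omega, ?_⟩
  · rw [hF]
    rintro v hv ⟨q, hq⟩
    have hvr := hr v hv
    rw [hF] at hx hy hu
    by_cases c1 : q + v.length ≤ a
    · exact hx v hv ⟨q, occ_congr0 hq fun k _ _ => (zx k (by omega)).symm⟩
    by_cases c2 : b ≤ q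
    · exact hy v hv ⟨q, occ_congr0 hq fun k _ _ => (zy k (by omega)).symm⟩
    · exact hu v hv ⟨_, occ_congr (p + r - a) hq fun k _ _ =>
        (zu k (by omega) (by omega)).symm⟩
  · have := occ_congr (y := z) (a - p - r) hWo (by
      intro k hk1 hk2
      rw [zu _ (by omega) (by omega)]
      congr 1; ring)
    convert this using 1
    ring

theorem glue2 {Λ : Type*} (X : Set (ℤ → Λ)) (W : List Λ) (K : ℕ) (hK : 0 < K)
    (hWK : W.length ≤ K)
    (hG : ∀ x y : ℤ → Λ, x ∈ X → y ∈ X → ∀ a b : ℤ, a + K ≤ b →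
      ∃ z ∈ X, (∀ k < a, z k = x k) ∧ (∀ k, b ≤ k → z k = y k) ∧
        ∃ j, a ≤ j ∧ j + W.length ≤ b ∧ OccursAt W z j)
    (n : ℕ) : ∀ (x y : ℤ → Λ) (_ : x ∈ X) (_ : y ∈ X) (a b : ℤ) (_ : a + K ≤ b)
      (_ : b < a + K + n * K),
    ∃ z ∈ X, (∀ k < a, z k = x k) ∧ (∀ k, b ≤ k → z k = y k) ∧
      (∃ j, a ≤ j ∧ j + W.length ≤ a + 2 * K ∧ j + W.length ≤ b ∧ OccursAt W z j) ∧
      ∀ m, a ≤ m → m ≤ b → ∃ j, m ≤ j ∧ j + W.length ≤ m + 3 * K ∧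
        (j = b ∨ (j + W.length ≤ b ∧ OccursAt W z j)) := by
  induction n with
  | zero => intro x y hx hy a b h1 h2; simp at h2; omega
  | succ n ih =>
    intro x y hx hy a b h1 h2
    have h2' : b < a + K + n * K + K := by push_cast at h2; linarith
    by_cases hb : b < a + 2 * K
    · obtain ⟨z, hz, zx, zy, j, hj1, hj2, hj3⟩ := hG x y hx hy a b h1
      exact ⟨z, hz, zx, zy, ⟨j, hj1, by omega, hj2, hj3⟩,
        fun m hm1 hm2 => ⟨b, hm2, by omega, Or.inl rfl⟩⟩
    · obtain ⟨z', hz', zx', zy', ⟨j', hj1', hj2', hj3', hj4'⟩, hw'⟩ :=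
        ih x y hx hy (a + K) b (by omega) (by linarith)
      obtain ⟨z, hz, zx, zy, j, hj1, hj2, hj3⟩ := hG x z' hx hz' a (a + K) le_rfl
      refine ⟨z, hz, zx, fun k hk => by rw [zy k (by omega), zy' k hk],
        ⟨j, hj1, by omega, by omega, hj3⟩, fun m hm1 hm2 => ?_⟩
      by_cases hm : m ≤ a + K
      · refine ⟨j', by omega, by omega, Or.inr ⟨hj3', occ_congr0 hj4' fun k _ _ => zy k (by omega)⟩⟩
      · obtain ⟨i, hi1, hi2, hi3⟩ := hw' m (by omega) hm2
        refine ⟨i, hi1, hi2, hi3.imp id fun h => ⟨h.1, occ_congr0 h.2 fun k _ _ => zy k (by omega)⟩⟩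

theorem occ_closed {Λ : Type*} [TopologicalSpace Λ] [DiscreteTopology Λ] (W : List Λ) (m : ℤ) :
    IsClosed {x : ℤ → Λ | OccursAt W x m} := by
  simp only [OccursAt, Set.ofPred_forall]
  exact isClosed_iInter fun i => isClosed_eq (continuous_apply _) continuous_const

theorem win_closed {Λ : Type*} [TopologicalSpace Λ] [DiscreteTopology Λ] (W : List Λ) (m : ℤ)
    (M : ℕ) :
    IsClosed {x : ℤ → Λ | ∃ j : ℤ, m ≤ j ∧ j + W.length ≤ m + M ∧ OccursAt W x j} := by
  have : {x : ℤ → Λ | ∃ j : ℤ, m ≤ j ∧ j + W.length ≤ m + M ∧ OccursAt W x j} =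
      ⋃ j ∈ Set.Icc m (m + M - W.length), {x : ℤ → Λ | OccursAt W x j} := by
    ext x
    simp only [Set.mem_ofPred_eq, Set.mem_iUnion, Set.mem_Icc, exists_prop, and_assoc]
    refine exists_congr fun j => and_congr_right fun _ => and_congr_left fun _ => ?_
    omega
  rw [this]
  exact (Set.finite_Icc _ _).isClosed_biUnion fun j _ => occ_closed W j

theorem occIn_translate {Λ : Type*} {w : List Λ} {x : ℤ → Λ} (d : ℤ) :
    OccursIn w (fun k => x (k + d)) ↔ OccursIn w x := by
  constructor
  · rintro ⟨m, h⟩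
    exact ⟨_, occ_congr d h fun k _ _ => rfl⟩
  · rintro ⟨m, h⟩
    exact ⟨_, occ_congr (-d) h fun k _ _ => by simp⟩

theorem trans_mem {Λ : Type*} {X : Set (ℤ → Λ)} {F : Finset (List Λ)}
    (hF : X = {x | ∀ w ∈ F, ¬ OccursIn w x}) {x : ℤ → Λ} (hx : x ∈ X) (d : ℤ) :
    (fun k => x (k + d)) ∈ X := by
  rw [hF] at hx ⊢
  intro w hw h
  exact hx w hw ((occIn_translate d).1 h)

theorem shift_iter {Λ : Type*} (n : ℕ) (x : ℤ → Λ) : shiftZ^[n] x = fun k => x (k + n) := by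
  induction n generalizing x with
  | zero => simp
  | succ n ih =>
    rw [Function.iterate_succ_apply, ih]
    funext k
    simp only [shiftZ]
    congr 1; push_cast; ring

theorem sft_win {Λ : Type*} [Fintype Λ] [TopologicalSpace Λ] [DiscreteTopology Λ]
    (X : Set (ℤ → Λ)) (hSFT : IsSFT X) (W : List Λ) (M : ℕ) : IsSFT (WindowSet X W M) := by
  classical
  obtain ⟨⟨hcl, hsh⟩, F, hF⟩ := hSFT
  let S : Set (List Λ) := {w | w.length = M ∧ ∀ x, OccursAt w x 0 →
    ¬ ∃ j : ℤ, 0 ≤ j ∧ j + W.length ≤ M ∧ OccursAt W x j}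
  have hS : S.Finite := (List.finite_length_eq Λ M).subset fun w hw => hw.1
  have hF' : WindowSet X W M = {x | ∀ w ∈ F ∪ hS.toFinset, ¬ OccursIn w x} := by
    ext x
    simp only [WindowSet, Set.mem_ofPred_eq, Finset.mem_union, Set.Finite.mem_toFinset]
    have hFx : x ∈ X ↔ ∀ w ∈ F, ¬ OccursIn w x := by rw [hF]; rfl
    constructor
    · rintro ⟨h1, h2⟩ w (hw | hw)
      · exact hFx.1 h1 w hw
      · rintro ⟨m, hm⟩
        obtain ⟨j, hj1, hj2, hj3⟩ := h2 m
        refine hw.2 (fun k => x (k + m)) ?_ ⟨j - m, by omega, by omega, ?_⟩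
        · have := occ_congr (y := fun k => x (k + m)) (-m) hm (fun k _ _ => by simp)
          simpa using this
        · exact occ_congr (-m) hj3 (fun k _ _ => by simp)
    · intro h
      refine ⟨hFx.2 fun w hw => h w (Or.inl hw), fun m => ?_⟩
      by_contra hc
      refine h (List.ofFn (fun i : Fin M => (fun k => x (m + k)) ((i : ℕ) : ℤ)))
        (Or.inr ⟨by simp, fun y hy => ?_⟩) ⟨m, occ_ofFn.2 fun k _ _ => rfl⟩
      rintro ⟨j, hj1, hj2, hj3⟩
      replace hy := (occ_ofFn (f := fun k => x (m + k))).1 hy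
      refine hc ⟨j + m, by omega, by omega, occ_congr m hj3 fun k hk1 hk2 => ?_⟩
      have := hy k (by omega) (by omega)
      rw [zero_add] at this
      rw [this, add_comm]
  refine ⟨⟨?_, ?_⟩, _, hF'⟩
  · have : WindowSet X W M = X ∩ ⋂ m : ℤ,
        {x : ℤ → Λ | ∃ j : ℤ, m ≤ j ∧ j + W.length ≤ m + M ∧ OccursAt W x j} := by
      ext x; simp [WindowSet]
    rw [this]
    exact hcl.inter (isClosed_iInter fun m => win_closed W m M)
  · apply Set.Subset.antisymm
    · rintro _ ⟨x, hx, rfl⟩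
      exact trans_mem hF' hx 1
    · intro x hx
      refine ⟨fun k => x (k + -1), trans_mem hF' hx (-1), ?_⟩
      funext k; simp [shiftZ]

theorem cyl {Λ : Type*} [TopologicalSpace Λ] [DiscreteTopology Λ] (U : Set (ℤ → Λ))
    (hU : IsOpen U) (x : ℤ → Λ) (hx : x ∈ U) :
    ∃ n : ℕ, ∀ z : ℤ → Λ, (∀ k : ℤ, -n ≤ k → k ≤ n → z k = x k) → z ∈ U := by
  obtain ⟨I, u, h1, h2⟩ := isOpen_pi_iff.1 hU x hx
  refine ⟨I.sup Int.natAbs, fun z hz => h2 fun k hk => ?_⟩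
  have := Finset.le_sup (f := Int.natAbs) hk
  rw [hz k (by omega) (by omega)]
  exact (h1 k hk).2

theorem statement_6
    {Λ : Type*} [Fintype Λ] [TopologicalSpace Λ] [DiscreteTopology Λ] [DecidableEq Λ]
    (X : Set (ℤ → Λ)) (hSFT : IsSFT X) (hmix : MixingSubshift X)
    (W : List Λ) (hW : AllowableIn X W)
    (L K : ℕ) (hL : 2 < L) (hK : 0 < K)
    (hKspec : ∀ α β : List Λ, AllowableIn X α → AllowableIn X β → ∀ l ≥ K,
      ∃ w : List Λ, w.length = l ∧ W <:+: w ∧ AllowableIn X (α ++ w ++ β)) :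
    (WindowSet X W (L * K)).Nonempty ∧ IsSFT (WindowSet X W (L * K)) ∧
      MixingSubshift (WindowSet X W (L * K)) := by
  have hsft' := sft_win X hSFT W (L * K)
  obtain ⟨⟨hcl, hsh⟩, F, hF⟩ := hSFT
  obtain ⟨x0, hx0, -⟩ := hW
  have hnil : AllowableIn X ([] : List Λ) := ⟨x0, hx0, 0, fun i => i.elim0⟩
  have hWK : W.length ≤ K := by
    obtain ⟨w, h1, h2, -⟩ := hKspec [] [] hnil hnil K le_rfl
    exact h1 ▸ h2.length_le
  have hG := glue X F hF W K hKspec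
  have hQ : ∀ (x y : ℤ → Λ) (_ : x ∈ X) (_ : y ∈ X) (a b : ℤ) (_ : a + K ≤ b),
    ∃ z ∈ X, (∀ k < a, z k = x k) ∧ (∀ k, b ≤ k → z k = y k) ∧
      (∃ j, a ≤ j ∧ j + W.length ≤ a + 2 * K ∧ j + W.length ≤ b ∧ OccursAt W z j) ∧
      ∀ m, a ≤ m → m ≤ b → ∃ j, m ≤ j ∧ j + W.length ≤ m + 3 * K ∧
        (j = b ∨ (j + W.length ≤ b ∧ OccursAt W z j)) := by
    intro x y hx hy a b hab
    refine glue2 X W K hK hWK hG (b - a).toNat x y hx hy a b hab ?_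
    have h1 : ((b - a).toNat : ℤ) = b - a := by omega
    rw [h1]
    nlinarith
  have hM : 3 * K ≤ L * K := Nat.mul_le_mul_right K hL
  generalize L * K = M at *
  refine ⟨?_, hsft', ?_⟩
  · let C : ℕ → Set (ℤ → Λ) := fun n => X ∩ ⋂ m ∈ Set.Icc (-n : ℤ) n,
      {x : ℤ → Λ | ∃ j : ℤ, m ≤ j ∧ j + W.length ≤ m + M ∧ OccursAt W x j}
    have hC : ∀ n, IsClosed (C n) := fun n =>
      hcl.inter (isClosed_biInter fun m _ => win_closed W m M)
    have := IsCompact.nonempty_iInter_of_sequence_nonempty_isCompact_isClosed C ?_ ?_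
      (hC 0).isCompact hC
    · obtain ⟨x, hx⟩ := this
      rw [Set.mem_iInter] at hx
      refine ⟨x, (hx 0).1, fun m => ?_⟩
      have := (hx m.natAbs).2
      rw [Set.mem_iInter₂] at this
      exact this m ⟨by omega, by omega⟩
    · intro n
      refine Set.inter_subset_inter_right _ (Set.biInter_subset_biInter_left ?_)
      apply Set.Icc_subset_Icc <;> push_cast <;> omega
    · intro n
      obtain ⟨z, hz, -, -, -, h⟩ := hQ x0 x0 hx0 hx0 (-n) (n + 3 * K + 1) (by omega)
      refine ⟨z, hz, Set.mem_iInter₂.2 fun m hm => ?_⟩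
      obtain ⟨hm1, hm2⟩ := hm
      obtain ⟨j, hj1, hj2, hj3 | hj3⟩ := h m hm1 (by omega)
      · omega
      · exact ⟨j, hj1, by omega, hj3.2⟩
  · rintro U V hU hV ⟨x, hxU, hx⟩ ⟨y, hyV, hy⟩
    obtain ⟨n1, hn1⟩ := cyl U hU x hxU
    obtain ⟨n2, hn2⟩ := cyl V hV y hyV
    obtain ⟨j0, hj01, hj02, hj03⟩ := hx.2 (n1 + 1)
    obtain ⟨j1, hj11, hj12, hj13⟩ := hy.2 (-n2 - M)
    refine ⟨n1 + n2 + 2 * M + K + 1, fun N hN => ?_⟩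
    have hy' : (fun k => y (k + -(N : ℤ))) ∈ WindowSet X W M := by
      obtain ⟨-, F', hF'⟩ := hsft'
      exact trans_mem hF' hy _
    have hoy : OccursAt W (fun k => y (k + -(N : ℤ))) (j1 + N) :=
      occ_congr N hj13 fun k _ _ => by simp
    obtain ⟨z, hz, zx, zy, ⟨i, hi1, hi2, hi3, hi4⟩, h⟩ :=
      hQ x _ hx.1 hy'.1 (j0 + W.length) (j1 + N) (by omega)
    have hzW : z ∈ WindowSet X W M := by
      refine ⟨hz, fun m => ?_⟩
      by_cases c1 : m + M ≤ j0 + W.length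
      · obtain ⟨j, h1, h2, h3⟩ := hx.2 m
        exact ⟨j, h1, h2, occ_congr0 h3 fun k _ _ => zx k (by omega)⟩
      by_cases c2 : m ≤ j0
      · exact ⟨j0, c2, by omega, occ_congr0 hj03 fun k _ _ => zx k (by omega)⟩
      by_cases c3 : m < j0 + W.length
      · exact ⟨i, by omega, by omega, hi4⟩
      by_cases c4 : m ≤ j1 + N
      · obtain ⟨j, h1, h2, h3 | h3⟩ := h m (by omega) c4
        · subst h3
          exact ⟨_, h1, by omega, occ_congr0 hoy fun k _ _ => zy k (by omega)⟩
        · exact ⟨j, h1, by omega, h3.2⟩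
      · obtain ⟨j, h1, h2, h3⟩ := hy'.2 m
        exact ⟨j, h1, h2, occ_congr0 h3 fun k _ _ => zy k (by omega)⟩
    refine ⟨shiftZ^[N] z, ⟨z, ⟨hn1 z fun k _ _ => zx k (by omega), hzW⟩, rfl⟩, ?_, ?_⟩
    · refine hn2 _ fun k _ _ => ?_
      rw [shift_iter]
      simp only
      rw [zy _ (by omega)]
      simp
    · rw [shift_iter]
      obtain ⟨-, F', hF'⟩ := hsft'
      exact trans_mem hF' hzW _
end

section
/- Let 0 < r < 1, let (X,d) be a compact metric space, and let (X,T) be a topological dynamical system of topological entropy h > 0. Then for every sufficiently small ε > 0 and every large enough l there exist two different orbit segments x, Tx, …, T^{l−1}x and y, Ty, …, T^{l−1}y such that the ε-overlap between them and the ε-self-overlaps of each of them are all smaller than r·l. -/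
open Filter Finset Topology

/-- The `ε`-overlap between two different orbit segments `x, Tx, …, T^{r−1}x` and
`y, Ty, …, T^{s−1}y`: the largest `1 ≤ k ≤ min r s` such that the last `k` points of one
segment `ε`-shadow the first `k` points of the other (or `0` if there is no such `k`). -/
noncomputable def epsOverlap {X : Type*} [MetricSpace X] (T : X → X) (ε : ℝ)
    (x : X) (r : ℕ) (y : X) (s : ℕ) : ℕ :=
  sSup ({k | 1 ≤ k ∧ k ≤ r ∧ k ≤ s ∧
    ((∀ i < k, dist (T^[r - k + i] x) (T^[i] y) < ε) ∨
      (∀ i < k, dist (T^[s - k + i] y) (T^[i] x) < ε))} ∪ {0})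

/-- The `ε`-self-overlap of the orbit segment `x, Tx, …, T^{r−1}x`: the largest `1 ≤ k < r`
such that its last `k` points `ε`-shadow its first `k` points (or `0` if there is no such `k`). -/
noncomputable def epsSelfOverlap {X : Type*} [MetricSpace X] (T : X → X) (ε : ℝ)
    (x : X) (r : ℕ) : ℕ :=
  sSup ({k | 1 ≤ k ∧ k < r ∧ ∀ i < k, dist (T^[r - k + i] x) (T^[i] x) < ε} ∪ {0})


namespace S12

variable {X : Type*} [MetricSpace X]

/-- `S` can be partitioned into `m` pieces of `d_n`-diameter at most `δ`. -/
def Cov (T : X → X) (S : Set X) (n : ℕ) (δ : ℝ) (m : ℕ) : Prop :=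
  ∃ f : X → Fin m, ∀ x ∈ S, ∀ y ∈ S, f x = f y → ∀ i < n, dist (T^[i] x) (T^[i] y) ≤ δ

lemma Cov.mk {T : X → X} {S : Set X} {n : ℕ} {δ : ℝ} {ι : Type*} [Fintype ι] (f : X → ι)
    (h : ∀ x ∈ S, ∀ y ∈ S, f x = f y → ∀ i < n, dist (T^[i] x) (T^[i] y) ≤ δ) :
    Cov T S n δ (Fintype.card ι) :=
  ⟨fun x => Fintype.equivFin ι (f x), fun x hx y hy hxy =>
    h x hx y hy ((Fintype.equivFin ι).injective hxy)⟩

lemma Cov.mono {T : X → X} {S S' : Set X} {n n' : ℕ} {δ δ' : ℝ} {m m' : ℕ}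
    (h : Cov T S n δ m) (hS : S' ⊆ S) (hn : n' ≤ n) (hδ : δ ≤ δ') (hm : m ≤ m') :
    Cov T S' n' δ' m' := by
  obtain ⟨f, hf⟩ := h
  refine ⟨fun x => Fin.castLE hm (f x), fun x hx y hy hxy i hi => ?_⟩
  exact (hf x (hS hx) y (hS hy) (Fin.castLE_injective hm hxy) i (by omega)).trans hδ

lemma Cov.iUnion {T : X → X} {n : ℕ} {δ : ℝ} {q N : ℕ} (S : ℕ → Set X) (hN : 0 < N)
    (h : ∀ k < N, Cov T (S k) n δ q) : Cov T {x | ∃ k < N, x ∈ S k} n δ (N * q) := by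
  classical
  have h' : ∀ k : Fin N, ∃ f : X → Fin q, ∀ x ∈ S k, ∀ y ∈ S k, f x = f y →
      ∀ i < n, dist (T^[i] x) (T^[i] y) ≤ δ := fun k => h k k.2
  choose f hf using h'
  have h2 : ∀ x, ∃ k : Fin N, (∃ k < N, x ∈ S k) → x ∈ S k := by
    intro x
    by_cases hx : ∃ k < N, x ∈ S k
    · obtain ⟨k, hk, hx⟩ := hx
      exact ⟨⟨k, hk⟩, fun _ => hx⟩
    · exact ⟨⟨0, hN⟩, fun h => absurd h hx⟩
  choose κ hκ using h2
  have := Cov.mk (T := T) (S := {x | ∃ k < N, x ∈ S k}) (n := n) (δ := δ)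
    (fun x => (κ x, f (κ x) x)) (by
      intro x hx y hy hxy
      simp only [Prod.mk.injEq] at hxy
      have h1 := hκ x hx
      have h2 := hκ y hy
      rw [← hxy.1] at h2
      refine hf (κ x) x h1 y h2 ?_
      have := hxy.2
      rw [← hxy.1] at this
      exact this)
  simpa using this

lemma Cov.union {T : X → X} {n : ℕ} {δ : ℝ} {q q' : ℕ} {S S' : Set X}
    (h : Cov T S n δ q) (h' : Cov T S' n δ q') : Cov T (S ∪ S') n δ (q + q') := by
  classical
  obtain ⟨f, hf⟩ := h
  obtain ⟨g, hg⟩ := h'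
  have := Cov.mk (T := T) (S := S ∪ S') (n := n) (δ := δ)
    (fun x => if x ∈ S then (Sum.inl (f x) : Fin q ⊕ Fin q') else Sum.inr (g x)) (by
      intro x hx y hy hxy
      by_cases h1 : x ∈ S <;> by_cases h2 : y ∈ S <;> simp [h1, h2] at hxy
      · exact hf x h1 y h2 hxy
      · exact hg x (hx.resolve_left h1) y (hy.resolve_left h2) hxy)
  simpa using this

lemma Cov.add {T : X → X} {m n : ℕ} {δ : ℝ} {a b : ℕ}
    (h : Cov T Set.univ m δ a) (h' : Cov T Set.univ n δ b) : Cov T Set.univ (m + n) δ (a * b) := by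
  obtain ⟨f, hf⟩ := h
  obtain ⟨g, hg⟩ := h'
  have := Cov.mk (T := T) (S := Set.univ) (n := m + n) (δ := δ)
    (fun x => (f x, g (T^[m] x))) (by
      intro x hx y hy hxy i hi
      simp only [Prod.mk.injEq] at hxy
      by_cases h : i < m
      · exact hf x hx y hy hxy.1 i h
      · have := hg _ trivial _ trivial hxy.2 (i - m) (by omega)
        rw [← Function.iterate_add_apply, ← Function.iterate_add_apply] at this
        rwa [show i - m + m = i by omega] at this)
  simpa using this

lemma exists_cov_one [CompactSpace X] (T : X → X) {δ : ℝ} (hδ : 0 < δ) :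
    ∃ m, Cov T Set.univ 1 δ m := by
  obtain ⟨t, -, ht, hc⟩ := (isCompact_univ (X := X)).finite_cover_balls (e := δ / 2) (by linarith)
  have : ∀ x : X, ∃ c : t, dist x c < δ / 2 := by
    intro x
    have := hc (Set.mem_univ x)
    simp only [Set.mem_iUnion, Metric.mem_ball] at this
    obtain ⟨c, hct, hxc⟩ := this
    exact ⟨⟨c, hct⟩, hxc⟩
  choose f hf using this
  have := ht.fintype
  refine ⟨_, Cov.mk f ?_⟩
  intro x _ y _ hxy i hi
  obtain rfl : i = 0 := by omega
  have h1 := hf x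
  have h2 := hf y
  rw [← hxy] at h2
  simp only [Function.iterate_zero, id]
  have := dist_triangle_right x y (f x : X)
  linarith

lemma exists_cov [CompactSpace X] [Nonempty X] (T : X → X) {δ : ℝ} (hδ : 0 < δ) (n : ℕ) :
    ∃ m, Cov T Set.univ n δ m := by
  induction n with
  | zero => exact ⟨1, fun _ => 0, by simp⟩
  | succ n ih =>
    obtain ⟨a, ha⟩ := ih
    obtain ⟨b, hb⟩ := exists_cov_one T hδ
    exact ⟨_, ha.add hb⟩

open Classical in
/-- minimal cardinality of a partition -/
noncomputable def D (T : X → X) (δ : ℝ) (n : ℕ) : ℕ := sInf {m | Cov T Set.univ n δ m}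

section
variable [CompactSpace X] [Nonempty X] (T : X → X)

lemma D_cov {δ : ℝ} (hδ : 0 < δ) (n : ℕ) : Cov T Set.univ n δ (D T δ n) :=
  Nat.sInf_mem (s := {m | Cov T Set.univ n δ m}) (exists_cov T hδ n)

lemma D_le {δ : ℝ} {n m : ℕ} (h : Cov T Set.univ n δ m) : D T δ n ≤ m := Nat.sInf_le h

lemma D_pos {δ : ℝ} (hδ : 0 < δ) (n : ℕ) : 0 < D T δ n := by
  obtain ⟨f, -⟩ := D_cov T hδ n
  exact Fin.pos (f (Classical.arbitrary X))

lemma D_mono_n {δ : ℝ} (hδ : 0 < δ) {m n : ℕ} (h : m ≤ n) : D T δ m ≤ D T δ n :=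
  D_le T ((D_cov T hδ n).mono subset_rfl h le_rfl le_rfl)

lemma D_anti {δ δ' : ℝ} (hδ : 0 < δ) (h : δ ≤ δ') (n : ℕ) : D T δ' n ≤ D T δ n :=
  D_le T ((D_cov T hδ n).mono subset_rfl le_rfl h le_rfl)

lemma D_add {δ : ℝ} (hδ : 0 < δ) (m n : ℕ) : D T δ (m + n) ≤ D T δ m * D T δ n :=
  D_le T ((D_cov T hδ m).add (D_cov T hδ n))

lemma D_pow {δ : ℝ} (hδ : 0 < δ) (p : ℕ) : D T δ p ≤ D T δ 1 ^ p := by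
  induction p with
  | zero =>
    rw [pow_zero]
    exact D_le T ⟨fun _ => 0, by simp⟩
  | succ p ih =>
    rw [pow_succ]
    exact (D_add T hδ p 1).trans (Nat.mul_le_mul_right _ ih)

lemma exists_lim {δ : ℝ} (hδ : 0 < δ) : ∃ h : ℝ,
    Tendsto (fun n : ℕ => Real.log (D T δ n) / n) atTop (𝓝 h) ∧
    ∀ n : ℕ, n * h ≤ Real.log (D T δ n) := by
  have hp : ∀ n, (0 : ℝ) < D T δ n := fun n => by exact_mod_cast D_pos T hδ n
  have hs : Subadditive (fun n : ℕ => Real.log (D T δ n)) := by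
    intro m n
    rw [← Real.log_mul (hp m).ne' (hp n).ne']
    exact Real.log_le_log (hp _) (by exact_mod_cast D_add T hδ m n)
  have hl : ∀ n, 0 ≤ Real.log (D T δ n) := fun n =>
    Real.log_nonneg (by exact_mod_cast D_pos T hδ n)
  have hb : BddBelow (Set.range fun n : ℕ => Real.log (D T δ n) / n) :=
    ⟨0, by rintro _ ⟨n, rfl⟩; have := hl n; positivity⟩
  refine ⟨hs.lim, hs.tendsto_lim hb, fun n => ?_⟩
  rcases Nat.eq_zero_or_pos n with rfl | hn
  · simpa using hl 0
  · have := hs.lim_le_div hb hn.ne'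
    rw [le_div_iff₀ (by positivity)] at this
    linarith

lemma mincard_le {δ : ℝ} (hδ : 0 < δ) {U : SetRel X X} (hU : ∀ x y : X, dist x y ≤ δ → (x, y) ∈ U)
    (n : ℕ) : Dynamics.coverMincard T Set.univ U n ≤ D T δ n := by
  classical
  obtain ⟨f, hf⟩ := D_cov T hδ n
  let g : Fin (D T δ n) → X := fun j => if h : ∃ x, f x = j then h.choose else Classical.arbitrary X
  have hg : ∀ x, f (g (f x)) = f x := by
    intro x
    have h : ∃ y, f y = f x := ⟨x, rfl⟩
    simp only [g, dif_pos h]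
    exact h.choose_spec
  have hcov : Dynamics.IsDynCoverOf T Set.univ U n ((Finset.univ.image g : Finset X) : Set X) := by
    intro x _
    refine ⟨g (f x), by simp, ?_⟩
    rw [Dynamics.mem_dynEntourage]
    intro k hk
    exact hU _ _ (hf _ trivial _ trivial (hg x).symm k hk)
  refine hcov.coverMincard_le_card.trans ?_
  exact_mod_cast Finset.card_image_le.trans (by simp)

lemma lim_pos {δ : ℝ} (hδ : 0 < δ) {U : SetRel X X} (hU : ∀ x y : X, dist x y ≤ δ → (x, y) ∈ U)
    (hent : 0 < Dynamics.coverEntropyEntourage T Set.univ U) {h : ℝ}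
    (hh : Tendsto (fun n : ℕ => Real.log (D T δ n) / n) atTop (𝓝 h)) : 0 < h := by
  have h1 : Dynamics.coverEntropyEntourage T Set.univ U ≤
      ExpGrowth.expGrowthSup (fun n => ENNReal.ofReal (D T δ n)) := by
    apply ExpGrowth.expGrowthSup_monotone
    intro n
    have := ENat.toENNReal_mono (mincard_le T hδ hU n)
    simpa using this
  have h2 : ExpGrowth.expGrowthSup (fun n => ENNReal.ofReal (D T δ n)) = (h : EReal) := by
    unfold ExpGrowth.expGrowthSup
    refine Tendsto.limsup_eq ?_
    have := (continuous_coe_real_ereal.tendsto h).comp hh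
    refine this.congr fun n => ?_
    have hp : (0 : ℝ) < D T δ n := by exact_mod_cast D_pos T hδ n
    simp only [Function.comp]
    rw [ENNReal.log_ofReal_of_pos hp, EReal.coe_div]
    rfl
  rw [h2] at h1
  exact_mod_cast hent.trans_le h1

lemma exists_scales (hent : 0 < Dynamics.coverEntropy T Set.univ) {r : ℝ} (hr0 : 0 < r)
    (hr1 : r < 1) : ∃ δ δ' h h' : ℝ, 0 < δ ∧ δ < δ' ∧ 0 < h' ∧ (1 - r) * h < h' ∧
      Tendsto (fun n : ℕ => Real.log (D T δ n) / n) atTop (𝓝 h) ∧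
      ∀ n : ℕ, n * h' ≤ Real.log (D T δ' n) := by
  unfold Dynamics.coverEntropy at hent
  simp only [lt_iSup_iff] at hent
  obtain ⟨U, hU, hent⟩ := hent
  obtain ⟨δ₁, hδ₁, hU⟩ := Metric.mem_uniformity_dist.1 hU
  have hex : ∀ δ : ℝ, ∃ h : ℝ, 0 < δ →
    Tendsto (fun n : ℕ => Real.log (D T δ n) / n) atTop (𝓝 h) ∧
    ∀ n : ℕ, n * h ≤ Real.log (D T δ n) := by
    intro δ
    by_cases h : 0 < δ
    · obtain ⟨a, ha⟩ := exists_lim T h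
      exact ⟨a, fun _ => ha⟩
    · exact ⟨0, fun h' => absurd h' h⟩
  choose H hH using hex
  have hpos : ∀ δ, 0 < δ → δ < δ₁ → 0 < H δ := fun δ h1 h2 =>
    lim_pos T h1 (fun x y hxy => hU (hxy.trans_lt h2)) hent (hH δ h1).1
  by_contra hcon
  have hcon' : ∀ a b, 0 < a → a < b → b < δ₁ → H b ≤ (1 - r) * H a := by
    intro a b ha hab hb
    by_contra h
    exact hcon ⟨a, b, H a, H b, ha, hab, hpos b (by linarith) hb, not_le.1 h, (hH a ha).1,
      (hH b (by linarith)).2⟩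
  have hK : ∀ K : ℕ, ∀ b, δ₁ / 4 < b → b < δ₁ → H b ≤ (1 - r) ^ K * H (δ₁ / 4) := by
    intro K
    induction K with
    | zero =>
      intro b h1 h2
      have := hcon' (δ₁ / 4) b (by linarith) h1 h2
      have h3 := hpos (δ₁ / 4) (by linarith) (by linarith)
      nlinarith
    | succ K ih =>
      intro b h1 h2
      have h3 := hcon' ((δ₁ / 4 + b) / 2) b (by linarith) (by linarith) h2
      have h4 := ih ((δ₁ / 4 + b) / 2) (by linarith) (by linarith)
      rw [pow_succ]
      nlinarith
  have ht : Tendsto (fun K : ℕ => (1 - r) ^ K * H (δ₁ / 4)) atTop (𝓝 (0 * H (δ₁ / 4))) :=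
    (tendsto_pow_atTop_nhds_zero_of_lt_one (by linarith) (by linarith)).mul_const _
  have := ge_of_tendsto' ht (fun K => hK K (δ₁ / 2) (by linarith) (by linarith))
  have h3 := hpos (δ₁ / 2) (by linarith) (by linarith)
  linarith

end


/-- points whose orbit segment of length `l` is `ε`-periodic with period `p` -/
def Per (T : X → X) (ε : ℝ) (l p : ℕ) : Set X :=
  {x | ∀ i, i + p < l → dist (T^[p + i] x) (T^[i] x) < ε}

lemma per_drift {T : X → X} {ε : ℝ} (hε : 0 < ε) {l p : ℕ} {x : X} (hx : x ∈ Per T ε l p)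
    (j i : ℕ) (h : p * j + i < l) : dist (T^[p * j + i] x) (T^[i] x) ≤ j * ε := by
  induction j with
  | zero => simp
  | succ j ih =>
    have e : p * (j + 1) + i = p + (p * j + i) := by ring
    have h1 := hx (p * j + i) (by omega)
    have h2 := ih (by omega)
    rw [e]
    have := dist_triangle (T^[p + (p * j + i)] x) (T^[p * j + i] x) (T^[i] x)
    push_cast
    linarith

section
variable [CompactSpace X] [Nonempty X] (T : X → X)

lemma per_cov {δ δ' ε : ℝ} (hδ : 0 < δ) (hε : 0 < ε) {M l p a : ℕ} (hp : 0 < p) (hM : 0 < M)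
    (hδ' : δ + 2 * M * ε ≤ δ') (hl : l ≤ a * (M * p)) :
    Cov T (Per T ε l p) l δ' (D T δ p ^ a) := by
  obtain ⟨f, hf⟩ := D_cov T hδ p
  have := Cov.mk (T := T) (S := Per T ε l p) (n := l) (δ := δ')
    (fun x => fun w : Fin a => f (T^[M * p * w] x)) (by
      intro x hx y hy hxy i hi
      have hMp : 0 < M * p := Nat.mul_pos hM hp
      have hw : i / (M * p) < a := by
        rw [Nat.div_lt_iff_lt_mul hMp]
        omega
      have hfw := congrFun hxy ⟨i / (M * p), hw⟩
      simp only at hfw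
      set t := M * p * (i / (M * p)) with ht
      set s := i % (M * p) with hs
      have hts : t + s = i := Nat.div_add_mod i (M * p)
      have hs' : s < M * p := Nat.mod_lt _ hMp
      set j := s / p with hj
      set i' := s % p with hi'
      have hji : p * j + i' = s := Nat.div_add_mod s p
      have hi'p : i' < p := Nat.mod_lt _ hp
      have hjM : j < M := by
        rw [hj, Nat.div_lt_iff_lt_mul hp]
        exact hs'
      have h1 := hf _ trivial _ trivial hfw i' hi'p
      rw [← Function.iterate_add_apply, ← Function.iterate_add_apply] at h1
      have key : ∀ z ∈ Per T ε l p, dist (T^[i] z) (T^[i' + t] z) ≤ M * ε := by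
        intro z hz
        have := per_drift hε hz j (i' + t) (by omega)
        rw [show p * j + (i' + t) = i by omega] at this
        refine this.trans ?_
        have : (j : ℝ) ≤ M := by exact_mod_cast hjM.le
        gcongr
      have hx' := key x hx
      have hy' := key y hy
      rw [dist_comm] at hy'
      have := dist_triangle4 (T^[i] x) (T^[i' + t] x) (T^[i' + t] y) (T^[i] y)
      linarith)
  simpa using this

/-- orbit of `y` starts by shadowing the tail of `x` -/
def OvA (ε : ℝ) (l : ℕ) (x : X) (p : ℕ) : Set X :=
  {y | ∀ i, i + p < l → dist (T^[p + i] x) (T^[i] y) < ε}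

/-- tail of the orbit of `y` shadows the start of `x` -/
def OvB (ε : ℝ) (l : ℕ) (x : X) (p : ℕ) : Set X :=
  {y | ∀ i, i + p < l → dist (T^[p + i] y) (T^[i] x) < ε}

lemma ovA_cov {δ δ' ε : ℝ} (hδ : 0 < δ) (hδδ : δ ≤ δ') (hε : 2 * ε ≤ δ') (l : ℕ) (x : X) (p : ℕ)
    (hp : p ≤ l) : Cov T (OvA T ε l x p) l δ' (D T δ p) := by
  obtain ⟨f, hf⟩ := D_cov T hδ p
  refine ⟨fun y => f (T^[l - p] y), fun y hy z hz hyz i hi => ?_⟩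
  by_cases h : i + p < l
  · have h1 := hy i h
    have h2 := hz i h
    have := dist_triangle_left (T^[i] y) (T^[i] z) (T^[p + i] x)
    linarith
  · have := hf _ trivial _ trivial hyz (i - (l - p)) (by omega)
    rw [← Function.iterate_add_apply, ← Function.iterate_add_apply] at this
    rw [show i - (l - p) + (l - p) = i by omega] at this
    linarith

lemma ovB_cov {δ δ' ε : ℝ} (hδ : 0 < δ) (hδδ : δ ≤ δ') (hε : 2 * ε ≤ δ') (l : ℕ) (x : X) (p : ℕ) :
    Cov T (OvB T ε l x p) l δ' (D T δ p) := by
  obtain ⟨f, hf⟩ := D_cov T hδ p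
  refine ⟨f, fun y hy z hz hyz i hi => ?_⟩
  by_cases h : p ≤ i
  · have h1 := hy (i - p) (by omega)
    have h2 := hz (i - p) (by omega)
    rw [show p + (i - p) = i by omega] at h1 h2
    have := dist_triangle_right (T^[i] y) (T^[i] z) (T^[i - p] x)
    linarith
  · have := hf _ trivial _ trivial hyz i (by omega)
    linarith

/-- The combinatorial core. -/
lemma core {δ δ' ε : ℝ} (hδ : 0 < δ) (hε : 0 < ε) {M l m q : ℕ} (hM : 0 < M)
    (hδ' : δ + 2 * M * ε ≤ δ') (hm : m ≤ l) (hq1 : D T δ m ≤ q) (hq2 : D T δ 1 ^ (2 * l / M) ≤ q)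
    (hbig : 3 * ((m + 1) * q) < D T δ' l) :
    ∃ x y : X, (∀ p, 0 < p → p ≤ m → x ∉ Per T ε l p) ∧ (∀ p, 0 < p → p ≤ m → y ∉ Per T ε l p) ∧
      (∀ p ≤ m, y ∉ OvA T ε l x p) ∧ (∀ p ≤ m, y ∉ OvB T ε l x p) := by
  have hM1 : (1 : ℝ) ≤ M := by exact_mod_cast hM
  have hε2 : 2 * ε ≤ δ' := by nlinarith
  have hδδ : δ ≤ δ' := by nlinarith
  have hC : 1 ≤ D T δ 1 := D_pos T hδ 1
  have hP : ∀ p < m + 1, Cov T (if 0 < p then Per T ε l p else ∅) l δ' q := by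
    intro p hp
    split_ifs with h0
    · by_cases hpl : l ≤ 1 * (M * p)
      · refine (per_cov T hδ hε h0 hM hδ' hpl).mono subset_rfl le_rfl le_rfl ?_
        rw [pow_one]
        exact (D_mono_n T hδ (by omega)).trans hq1
      · have hMp : 0 < M * p := Nat.mul_pos hM h0
        have hlt := Nat.lt_div_mul_add (a := l) hMp
        refine (per_cov T hδ hε h0 hM hδ' (a := l / (M * p) + 1) (by linarith)).mono
          subset_rfl le_rfl le_rfl ?_
        refine (Nat.pow_le_pow_left (D_pow T hδ p) _).trans ?_
        rw [← pow_mul]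
        refine (Nat.pow_le_pow_right hC ?_).trans hq2
        rw [Nat.le_div_iff_mul_le hM]
        have := Nat.div_mul_le_self l (M * p)
        nlinarith
    · obtain ⟨f, _⟩ := (D_cov T hδ m).mono subset_rfl le_rfl le_rfl hq1
      exact ⟨f, by simp⟩
  have hA : ∀ x, ∀ p < m + 1, Cov T (OvA T ε l x p) l δ' q := fun x p hp =>
    (ovA_cov T hδ hδδ hε2 l x p (by omega)).mono subset_rfl le_rfl le_rfl
      ((D_mono_n T hδ (by omega)).trans hq1)
  have hB : ∀ x, ∀ p < m + 1, Cov T (OvB T ε l x p) l δ' q := fun x p hp =>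
    (ovB_cov T hδ hδδ hε2 l x p).mono subset_rfl le_rfl le_rfl
      ((D_mono_n T hδ (by omega)).trans hq1)
  have hP' := Cov.iUnion _ (show 0 < m + 1 by omega) hP
  have hex : ∀ S : Set X, ∀ N, Cov T S l δ' N → N < D T δ' l → ∃ x, x ∉ S := by
    intro S N hS hN
    by_contra! h
    have := D_le T (hS.mono (S' := Set.univ) (fun x _ => h x) le_rfl le_rfl le_rfl)
    omega
  obtain ⟨x, hx⟩ := hex _ _ hP' (by omega)
  have hA' := Cov.iUnion _ (show 0 < m + 1 by omega) (hA x)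
  have hB' := Cov.iUnion _ (show 0 < m + 1 by omega) (hB x)
  obtain ⟨y, hy⟩ := hex _ _ ((hP'.union hA').union hB') (by omega)
  simp only [Set.mem_union, not_or] at hy
  obtain ⟨⟨hy1, hy2⟩, hy3⟩ := hy
  refine ⟨x, y, fun p h0 hp h => hx ⟨p, by omega, by simpa [h0] using h⟩,
    fun p h0 hp h => hy1 ⟨p, by omega, by simpa [h0] using h⟩,
    fun p hp h => hy2 ⟨p, by omega, h⟩, fun p hp h => hy3 ⟨p, by omega, h⟩⟩

lemma asym {h' γ : ℝ} (hγ : γ < h') : ∀ᶠ l : ℕ in atTop,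
    6 * ((l : ℝ) + 1) * Real.exp (γ * l) < Real.exp (h' * l) := by
  have hc : 0 < h' - γ := by linarith
  have h1 : Tendsto (fun l : ℕ => 6 * ((l : ℝ) + 1) * Real.exp (-(h' - γ) * l)) atTop (𝓝 0) := by
    have a := (Real.tendsto_pow_mul_exp_neg_atTop_nhds_zero 1).comp
      ((tendsto_natCast_atTop_atTop (R := ℝ)).const_mul_atTop hc)
    have b := (Real.tendsto_pow_mul_exp_neg_atTop_nhds_zero 0).comp
      ((tendsto_natCast_atTop_atTop (R := ℝ)).const_mul_atTop hc)
    have c := (a.const_mul (6 / (h' - γ))).add (b.const_mul 6)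
    simp only [mul_zero, add_zero] at c
    refine c.congr fun l => ?_
    simp only [Function.comp, pow_one, pow_zero, one_mul]
    rw [← neg_mul]
    field_simp
    try ring
  filter_upwards [h1.eventually_lt_const one_pos] with l hl
  have e : Real.exp (γ * l) = Real.exp (-(h' - γ) * l) * Real.exp (h' * l) := by
    rw [← Real.exp_add]; congr 1; ring
  rw [e, ← mul_assoc]
  have := Real.exp_pos (h' * l)
  nlinarith

end

lemma overlap_lt {T : X → X} {ε : ℝ} {l : ℕ} {x y : X} {c : ℝ} (hc : 0 < c)
    (hA : ∀ p : ℕ, p ≤ l → (l : ℝ) - p ≥ c → y ∉ OvA T ε l x p)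
    (hB : ∀ p : ℕ, p ≤ l → (l : ℝ) - p ≥ c → y ∉ OvB T ε l x p) :
    (epsOverlap T ε x l y l : ℝ) < c := by
  have hmem := Nat.sSup_mem (s := {k | 1 ≤ k ∧ k ≤ l ∧ k ≤ l ∧
    ((∀ i < k, dist (T^[l - k + i] x) (T^[i] y) < ε) ∨
      (∀ i < k, dist (T^[l - k + i] y) (T^[i] x) < ε))} ∪ {0}) ⟨0, by simp⟩
      ⟨l, by rintro k (hk | hk); exacts [hk.2.1, by simp at hk; omega]⟩
  change epsOverlap T ε x l y l ∈ _ at hmem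
  generalize epsOverlap T ε x l y l = k at hmem
  rcases hmem with ⟨h1, h2, -, h3⟩ | h
  · by_contra! hk
    have hcast : (l : ℝ) - ((l - k : ℕ) : ℝ) ≥ c := by
      rw [Nat.cast_sub h2]; linarith
    rcases h3 with h3 | h3
    · exact hA (l - k) (by omega) hcast fun i hi => h3 i (by omega)
    · exact hB (l - k) (by omega) hcast fun i hi => h3 i (by omega)
  · simp at h
    subst h
    simpa using hc

lemma selfOverlap_lt {T : X → X} {ε : ℝ} {l : ℕ} {x : X} {c : ℝ} (hc : 0 < c)
    (hA : ∀ p : ℕ, 0 < p → p ≤ l → (l : ℝ) - p ≥ c → x ∉ Per T ε l p) :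
    (epsSelfOverlap T ε x l : ℝ) < c := by
  have hmem := Nat.sSup_mem (s := {k | 1 ≤ k ∧ k < l ∧
    ∀ i < k, dist (T^[l - k + i] x) (T^[i] x) < ε} ∪ {0}) ⟨0, by simp⟩
      ⟨l, by rintro k (hk | hk); exacts [hk.2.1.le, by simp at hk; omega]⟩
  change epsSelfOverlap T ε x l ∈ _ at hmem
  generalize epsSelfOverlap T ε x l = k at hmem
  rcases hmem with ⟨h1, h2, h3⟩ | h
  · by_contra! hk
    have hcast : (l : ℝ) - ((l - k : ℕ) : ℝ) ≥ c := by
      rw [Nat.cast_sub h2.le]; linarith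
    exact hA (l - k) (by omega) (by omega) hcast fun i hi => h3 i (by omega)
  · simp at h
    subst h
    simpa using hc

end S12

theorem statement_12
    {X : Type*} [MetricSpace X] [CompactSpace X]
    (T : X → X) (hT : Continuous T)
    (hent : 0 < Dynamics.coverEntropy T Set.univ)
    (r : ℝ) (hr0 : 0 < r) (hr1 : r < 1) :
    ∃ ε₀ > (0 : ℝ), ∀ ε, 0 < ε → ε ≤ ε₀ → ∃ L : ℕ, ∀ l ≥ L, ∃ x y : X,
      (∃ i < l, T^[i] x ≠ T^[i] y) ∧
      (epsOverlap T ε x l y l : ℝ) < r * l ∧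
      (epsSelfOverlap T ε x l : ℝ) < r * l ∧
      (epsSelfOverlap T ε y l : ℝ) < r * l := by
  have hne : Nonempty X := by
    by_contra h
    rw [not_nonempty_iff] at h
    rw [Set.univ_eq_empty_iff.2 h, Dynamics.coverEntropy_empty] at hent
    exact absurd hent (by simp)
  obtain ⟨δ, δ', h, h', hδ, hδδ, hh', hlt, hlim, hlow⟩ := S12.exists_scales T hent hr0 hr1
  have hr : 0 < 1 - r := by linarith
  obtain ⟨γ, hγ1, hγ2⟩ := exists_between (max_lt hlt hh')
  obtain ⟨hγ3, hγ0⟩ := max_lt_iff.1 hγ1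
  obtain ⟨M, hM⟩ := exists_nat_gt (max 0 (2 * Real.log (S12.D T δ 1) / γ))
  obtain ⟨hM0, hM1⟩ := max_lt_iff.1 hM
  have hMγ : 2 * Real.log (S12.D T δ 1) ≤ γ * M := by
    rw [div_lt_iff₀ hγ0] at hM1; linarith
  refine ⟨(δ' - δ) / (2 * M), by have : 0 < δ' - δ := by linarith
                                 positivity, fun ε hε hεle => ?_⟩
  have hεM : δ + 2 * M * ε ≤ δ' := by
    rw [le_div_iff₀ (by positivity)] at hεle; linarith
  have hfl : Tendsto (fun l : ℕ => ⌊(1 - r) * (l : ℝ)⌋₊) atTop atTop :=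
    tendsto_nat_floor_atTop.comp ((tendsto_natCast_atTop_atTop (R := ℝ)).const_mul_atTop hr)
  have hev : ∀ᶠ n : ℕ in atTop, Real.log (S12.D T δ n) / n < γ / (1 - r) :=
    hlim.eventually_lt_const (by rw [lt_div_iff₀ hr]; linarith)
  have hall := ((hfl.eventually (hev.and (eventually_gt_atTop 0))).and (S12.asym hγ2)).and
    (eventually_gt_atTop 0)
  obtain ⟨L, hL⟩ := eventually_atTop.1 hall
  refine ⟨L, fun l hl => ?_⟩
  obtain ⟨⟨⟨h1, h2⟩, h3⟩, hl0⟩ := hL l hl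
  have hl0' : (0 : ℝ) < l := by exact_mod_cast hl0
  have hmle : (⌊(1 - r) * (l : ℝ)⌋₊ : ℝ) ≤ (1 - r) * l := Nat.floor_le (by positivity)
  have hfloor : ∀ p : ℕ, (l : ℝ) - p ≥ r * l → p ≤ ⌊(1 - r) * (l : ℝ)⌋₊ := by
    intro p hp
    exact Nat.le_floor (by linarith)
  generalize ⌊(1 - r) * (l : ℝ)⌋₊ = m at *
  have hml : m ≤ l := by
    have : (m : ℝ) ≤ l := by nlinarith
    exact_mod_cast this
  have hDpos : ∀ n, (0 : ℝ) < S12.D T δ n := fun n => by exact_mod_cast S12.D_pos T hδ n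
  have hE : (1 : ℝ) ≤ Real.exp (γ * l) := Real.one_le_exp (by positivity)
  have hq1 : (S12.D T δ m : ℝ) ≤ Real.exp (γ * l) := by
    rw [← Real.log_le_iff_le_exp (hDpos m)]
    have hm0 : (0 : ℝ) < m := by exact_mod_cast h2
    rw [div_lt_iff₀ hm0, div_mul_eq_mul_div, lt_div_iff₀ hr] at h1
    nlinarith
  have hq2 : ((S12.D T δ 1 ^ (2 * l / M) : ℕ) : ℝ) ≤ Real.exp (γ * l) := by
    push_cast
    rw [← Real.log_le_iff_le_exp (pow_pos (hDpos 1) _), Real.log_pow]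
    have hlg : 0 ≤ Real.log (S12.D T δ 1) :=
      Real.log_nonneg (by exact_mod_cast S12.D_pos T hδ 1)
    have hd : ((2 * l / M : ℕ) : ℝ) ≤ 2 * l / M := by
      have := Nat.cast_div_le (α := ℝ) (m := 2 * l) (n := M)
      push_cast at this
      exact this
    calc ((2 * l / M : ℕ) : ℝ) * Real.log (S12.D T δ 1)
        ≤ (2 * l / M) * Real.log (S12.D T δ 1) := by gcongr
      _ = l / M * (2 * Real.log (S12.D T δ 1)) := by ring
      _ ≤ l / M * (γ * M) := by gcongr
      _ = γ * l := by field_simp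
  obtain ⟨x, y, hx, hy, hA, hB⟩ := S12.core T hδ hε (M := M) (l := l) (m := m)
    (q := ⌈Real.exp (γ * l)⌉₊) (by exact_mod_cast hM0) hεM hml
    (by exact_mod_cast hq1.trans (Nat.le_ceil _)) (by exact_mod_cast hq2.trans (Nat.le_ceil _)) (by
      have hceil : (⌈Real.exp (γ * l)⌉₊ : ℝ) ≤ 2 * Real.exp (γ * l) := by
        have := Nat.ceil_lt_add_one (Real.exp_pos (γ * l)).le
        linarith
      have hD' : Real.exp (h' * l) ≤ S12.D T δ' l := by
        rw [← Real.le_log_iff_exp_le (by exact_mod_cast S12.D_pos T (hδ.trans hδδ) l)]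
        linarith [hlow l]
      have hmr : (m : ℝ) ≤ l := by exact_mod_cast hml
      have : (3 * (((m : ℝ) + 1) * (⌈Real.exp (γ * l)⌉₊ : ℝ))) < S12.D T δ' l := by
        calc (3 * (((m : ℝ) + 1) * (⌈Real.exp (γ * l)⌉₊ : ℝ)))
            ≤ 3 * ((l + 1) * (2 * Real.exp (γ * l))) := by gcongr
          _ = 6 * ((l : ℝ) + 1) * Real.exp (γ * l) := by ring
          _ < _ := h3.trans_le hD'
      exact_mod_cast this)
  have hrl : 0 < r * l := by positivity
  refine ⟨x, y, ?_, S12.overlap_lt hrl (fun p _ hp => hA p (hfloor p hp))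
    (fun p _ hp => hB p (hfloor p hp)),
    S12.selfOverlap_lt hrl (fun p h0 _ hp => hx p h0 (hfloor p hp)),
    S12.selfOverlap_lt hrl (fun p h0 _ hp => hy p h0 (hfloor p hp))⟩
  by_contra! hcon
  refine hA 0 (by omega) fun i hi => ?_
  rw [zero_add, hcon i (by omega), dist_self]
  exact hε
end

section
/- Let Λ be a finite set and x = (x_n)_{n≥0} ∈ Λ^{ℕ∪{0}} a sequence such that for every n ≥ 1 there exists k > n−1 with x_k…x_{k+n−1} = x₀…x_{n−1}. Define R_n(x) = min{k > 0 : x_k…x_{k+n−1} = x₀…x_{n−1}} and R'_n(x) = min{k > n−1 : x_k…x_{k+n−1} = x₀…x_{n−1}}. If liminf_{n→∞} (log R'_n(x))/n > 0, then R_n(x) = R'_n(x) for all but finitely many n, and consequently lim_{n→∞} (log R_n(x))/n exists if and only if lim_{n→∞} (log R'_n(x))/n exists, in which case the limits are equal. -/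
open Filter Finset Topology

/-- `R_n(x)`: the least `k > 0` such that the word of length `n` starting at coordinate `k`
of `x` equals the initial word of length `n` of `x`. -/
noncomputable def firstReturn {Λ : Type*} (x : ℕ → Λ) (n : ℕ) : ℕ :=
  sInf {k | 0 < k ∧ ∀ i < n, x (k + i) = x i}

/-- `R'_n(x)`: the least `k > n − 1` such that the word of length `n` starting at coordinate
`k` of `x` equals the initial word of length `n` of `x` (non-overlapping return). -/
noncomputable def firstReturn' {Λ : Type*} (x : ℕ → Λ) (n : ℕ) : ℕ :=
  sInf {k | n ≤ k ∧ ∀ i < n, x (k + i) = x i}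

theorem s14_growth (f : ℕ → ℕ)
    (h : 0 < atTop.liminf (fun n : ℕ => Real.log (f n) / (n : ℝ))) :
    ∀ᶠ m in atTop, 3 * m + 1 < f m := by
  rw [liminf_eq] at h
  obtain ⟨a, ha, ha0⟩ : ∃ a ∈ {a : ℝ | ∀ᶠ n : ℕ in atTop, a ≤ Real.log (f n) / (n : ℝ)}, 0 < a := by
    by_contra hc
    push Not at hc
    exact absurd (Real.sSup_nonpos hc) (not_le.mpr h)
  filter_upwards [ha, eventually_gt_atTop 0, eventually_gt_atTop ⌈6 / a ^ 2⌉₊] with m hm hm0 hm1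
  have hm0' : (0 : ℝ) < m := by exact_mod_cast hm0
  have hm2 : 6 / a ^ 2 < (m : ℝ) := lt_of_le_of_lt (Nat.le_ceil _) (by exact_mod_cast hm1)
  rw [div_lt_iff₀ (by positivity)] at hm2
  rw [le_div_iff₀ hm0'] at hm
  have ham : 0 < a * m := by positivity
  have hf : (0 : ℝ) < f m := by
    rcases Nat.eq_zero_or_pos (f m) with h0 | h0
    · rw [h0] at hm
      simp at hm
      linarith
    · exact_mod_cast h0
  rw [Real.le_log_iff_exp_le hf] at hm
  have hq := Real.quadratic_le_exp_of_nonneg ham.le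
  have : (3 * m + 1 : ℝ) < f m := by nlinarith [mul_lt_mul_of_pos_right hm2 hm0']
  exact_mod_cast this

theorem s14_key {Λ : Type*} (x : ℕ → Λ)
    (hrec : ∀ n : ℕ, 1 ≤ n → ∃ k, n ≤ k ∧ ∀ i < n, x (k + i) = x i) (n : ℕ) (hn : 2 ≤ n)
    (hne : firstReturn x n ≠ firstReturn' x n) : firstReturn' x (n / 2) ≤ 3 * (n / 2) + 1 := by
  have h' : firstReturn' x n ∈ {k | n ≤ k ∧ ∀ i < n, x (k + i) = x i} :=
    Nat.sInf_mem (hrec n (by omega))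
  have hle : firstReturn x n ≤ firstReturn' x n :=
    Nat.sInf_le ⟨by have := h'.1; omega, h'.2⟩
  have h : firstReturn x n ∈ {k | 0 < k ∧ ∀ i < n, x (k + i) = x i} :=
    Nat.sInf_mem ⟨_, by have := h'.1; omega, h'.2⟩
  have hlt : firstReturn x n < n := by
    by_contra hc
    exact hne (le_antisymm hle (Nat.sInf_le ⟨by omega, h.2⟩))
  generalize firstReturn x n = p at h hlt
  obtain ⟨hp, hper⟩ := h
  have key : ∀ q i, q * p + i < n + p → x (q * p + i) = x i := by
    intro q
    induction q with
    | zero => intro i _; simp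
    | succ q ih =>
      intro i hi
      have e : (q + 1) * p + i = p + (q * p + i) := by ring
      rw [e] at hi ⊢
      rw [hper _ (by omega), ih i (by omega)]
  have e := Nat.div_add_mod (n / 2 + p - 1) p
  have l := Nat.mod_lt (n / 2 + p - 1) hp
  rw [mul_comm] at e
  generalize (n / 2 + p - 1) / p = q at *
  have : firstReturn' x (n / 2) ≤ q * p :=
    Nat.sInf_le ⟨by omega, fun i hi => key q i (by omega)⟩
  omega

theorem statement_14
    {Λ : Type*} [Fintype Λ] (x : ℕ → Λ)
    (hrec : ∀ n : ℕ, 1 ≤ n → ∃ k, n ≤ k ∧ ∀ i < n, x (k + i) = x i)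
    (hliminf : 0 < atTop.liminf (fun n : ℕ => Real.log (firstReturn' x n) / (n : ℝ))) :
    (∀ᶠ n in atTop, firstReturn x n = firstReturn' x n) ∧
    ∀ c : ℝ,
      (Tendsto (fun n : ℕ => Real.log (firstReturn x n) / (n : ℝ)) atTop (𝓝 c) ↔
        Tendsto (fun n : ℕ => Real.log (firstReturn' x n) / (n : ℝ)) atTop (𝓝 c)) := by
  have h1 : ∀ᶠ n in atTop, firstReturn x n = firstReturn' x n := by
    have h := s14_growth (firstReturn' x) hliminf
    rw [eventually_atTop] at h ⊢
    obtain ⟨N, hN⟩ := h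
    refine ⟨2 * N + 2, fun n hn => ?_⟩
    by_contra hne
    have := s14_key x hrec n (by omega) hne
    have := hN (n / 2) (by omega)
    omega
  refine ⟨h1, fun c => tendsto_congr' ?_⟩
  filter_upwards [h1] with n hn
  rw [hn]
end
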